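/- Let V be a finite-dimensional real vector space and (A, ω) a k-contact linear structure on V, and let e_1, …, e_k denote the standard basis of ℝ^k. Then there exists a unique family of vectors r_1, …, r_k ∈ V such that A(r_α) = e_α and ω(r_α, w) = 0 for all w ∈ V and all α ∈ {1,…,k}; moreover, ker ω = span{r_1, …, r_k}. (This is the pointwise linear-algebraic content of the existence and uniqueness of Reeb vector fields of a co-oriented k-contact manifold.) -/

import Mathlib

/-!
Since `ker ω` meets `ker A` only in `0`, the map `A` is injective on `ker ω`; as `ker ω` has the
dimension of the target of `A`, it is mapped isomorphically onto it. The Reeb vectors are the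
preimages in `ker ω` of the standard basis vectors, hence unique and a basis of `ker ω`.
-/

open LinearMap Submodule

section DualFamily

variable {R V ι : Type*} [DecidableEq ι]

/-- A family of vectors in the submodule `S` that is dual to the components of `A`. For
`S = ker ω`, with `ω` a bilinear map, such a family consists of the Reeb vectors of `(A, ω)`. -/
def IsDualFamily [Semiring R] [AddCommMonoid V] [Module R V]
    (A : V →ₗ[R] (ι → R)) (S : Submodule R V) (r : ι → V) : Prop :=
  ∀ α, A (r α) = Pi.single α 1 ∧ r α ∈ S

section Semiring

variable [Semiring R] [AddCommMonoid V] [Module R V] {A : V →ₗ[R] (ι → R)} {S : Submodule R V}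
  {r s : ι → V}

theorem IsDualFamily.unique (hr : IsDualFamily A S r) (hs : IsDualFamily A S s)
    (hA : Set.InjOn A S) : r = s :=
  funext fun α ↦ hA (hr α).2 (hs α).2 ((hr α).1.trans (hs α).1.symm)

theorem IsDualFamily.map_sum_smul [Fintype ι] (hr : IsDualFamily A S r) (c : ι → R) :
    A (∑ α, c α • r α) = c := by
  simp only [map_sum, map_smul, (hr _).1]
  exact (pi_eq_sum_univ' c).symm

theorem IsDualFamily.eq_sum_smul [Fintype ι] (hr : IsDualFamily A S r) (hA : Set.InjOn A S)
    {v : V} (hv : v ∈ S) : v = ∑ α, A v α • r α :=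
  hA hv (sum_mem fun α _ ↦ S.smul_mem _ (hr α).2) (hr.map_sum_smul (A v)).symm

theorem IsDualFamily.span_range_eq [Finite ι] (hr : IsDualFamily A S r) (hA : Set.InjOn A S) :
    span R (Set.range r) = S := by
  have := Fintype.ofFinite ι
  refine le_antisymm (span_le.mpr <| Set.range_subset_iff.mpr fun α ↦ (hr α).2) fun v hv ↦ ?_
  rw [hr.eq_sum_smul hA hv]
  exact sum_mem fun α _ ↦ smul_mem _ _ (subset_span (Set.mem_range_self α))

end Semiring

theorem exists_isDualFamily [Fintype ι] [DivisionRing R] [AddCommGroup V] [Module R V]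
    {A : V →ₗ[R] (ι → R)} {S : Submodule R V} (hA : Set.InjOn A S)
    (hdim : Module.finrank R S = Fintype.card ι) : ∃ r, IsDualFamily A S r := by
  have hinj : Function.Injective (A.domRestrict S) := hA.injective
  have : FiniteDimensional R S := .of_injective _ hinj
  have hsurj : Function.Surjective (A.domRestrict S) :=
    (injective_iff_surjective_of_finrank_eq_finrank (by simpa using hdim)).mp hinj
  choose r hr using fun α ↦ hsurj (Pi.single α 1)
  exact ⟨fun α ↦ r α, fun α ↦ ⟨hr α, (r α).2⟩⟩

theorem isDualFamily_ker_iff [CommSemiring R] [AddCommMonoid V] [Module R V]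
    {U W : Type*} [AddCommMonoid U] [Module R U] [AddCommMonoid W] [Module R W]
    {A : V →ₗ[R] (ι → R)} {ω : V →ₗ[R] U →ₗ[R] W} {r : ι → V} :
    IsDualFamily A (ker ω) r ↔ ∀ α, A (r α) = Pi.single α 1 ∧ ∀ w, ω (r α) w = 0 := by
  simp only [IsDualFamily, mem_ker, LinearMap.ext_iff, LinearMap.zero_apply]

end DualFamily

theorem stmt_0_general {K V U W ι : Type*} [Field K] [AddCommGroup V] [Module K V]
    [AddCommGroup U] [Module K U] [AddCommGroup W] [Module K W] [Fintype ι] [DecidableEq ι]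
    (A : V →ₗ[K] (ι → K)) (ω : V →ₗ[K] U →ₗ[K] W)
    (hdim : Module.finrank K (ker ω) = Fintype.card ι) (hdisj : Disjoint (ker A) (ker ω)) :
    (∃! r : ι → V, ∀ α, A (r α) = Pi.single α 1 ∧ ∀ w, ω (r α) w = 0) ∧
    ∀ r : ι → V, (∀ α, A (r α) = Pi.single α 1 ∧ ∀ w, ω (r α) w = 0) →
      ker ω = span K (Set.range r) := by
  simp only [← isDualFamily_ker_iff]
  have hA : Set.InjOn A (ker ω) := disjoint_ker_iff_injOn.mp hdisj.symm
  obtain ⟨r, hr⟩ := exists_isDualFamily hA hdim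
  exact ⟨⟨r, hr, fun s hs ↦ hs.unique hr hA⟩, fun s hs ↦ (hs.span_range_eq hA).symm⟩

/-- **Existence and uniqueness of Reeb vectors for a k-contact linear structure.**
A k-contact linear structure on a finite-dimensional real vector space `V` is a pair
`(A, ω)` where `A : V → ℝ^k` is linear and `ω : V × V → ℝ^k` is alternating bilinear,
with `ker A` nonzero of codimension `k`, `ker ω` of dimension `k`, and
`ker A ∩ ker ω = 0`. Then there is a unique family `r : Fin k → V` with
`A (r α) = e_α` and `ω (r α) w = 0` for all `w`; moreover `ker ω = span {r_1, …, r_k}`. -/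
theorem stmt_0 (k : ℕ) (V : Type*) [AddCommGroup V] [Module ℝ V]
    [FiniteDimensional ℝ V]
    (A : V →ₗ[ℝ] (Fin k → ℝ)) (ω : V →ₗ[ℝ] V →ₗ[ℝ] (Fin k → ℝ))
    (hAlt : ∀ v : V, ω v v = 0)
    (hkerA_ne : LinearMap.ker A ≠ ⊥)
    (hcodim : Module.finrank ℝ V = Module.finrank ℝ (LinearMap.ker A) + k)
    (hkerω : Module.finrank ℝ (LinearMap.ker ω) = k)
    (hint : LinearMap.ker A ⊓ LinearMap.ker ω = ⊥) :
    (∃! r : Fin k → V, ∀ α : Fin k,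
        A (r α) = Pi.single α 1 ∧ ∀ w : V, ω (r α) w = 0) ∧
    (∀ r : Fin k → V,
      (∀ α : Fin k, A (r α) = Pi.single α 1 ∧ ∀ w : V, ω (r α) w = 0) →
      LinearMap.ker ω = Submodule.span ℝ (Set.range r)) :=
  stmt_0_general A ω (by simpa using hkerω) (disjoint_iff.mpr hint)
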